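/- Suppose X'X/n → Q with Q symmetric positive definite. Let M̂ be a sequence of measurable model selectors taking values in {M_R, M_U} such that P_{n,β,σ}(M̂ = M_R) → 1 whenever β₂ = 0 and P_{n,β,σ}(M̂ = M_U) → 1 whenever β₂ ≠ 0. Define the random density f̌_n to equal the N(0, σ²(X'X/n)⁻¹) density on the event {M̂ = M_U}, and to equal f†_{∞,0} (the formula for f_{∞,0} with Q replaced by X'X/n) otherwise. Then for every β ∈ ℝ^k, ∫_{ℝ^k} |f̌_n(z) − f_{n,β,σ}(z)| dz → 0 in P_{n,β,σ}-probability as n → ∞; consequently, for every δ > 0, P_{n,β,σ}(‖F̌_n − F_{n,β,σ}‖_{TV} > δ) → 0, where F̌_n is the cdf corresponding to f̌_n and F_{n,β,σ} is the cdf of √n(β̃ − β). -/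

import Mathlib

open MeasureTheory Matrix Real Filter Topology ENNReal NNReal

noncomputable section

/-- Euclidean norm of a finite tuple. -/
def enorm2 {ι : Type*} [Fintype ι] (v : ι → ℝ) : ℝ := Real.sqrt (∑ i, v i ^ 2)

/-- The `N(0, σ² I)` distribution on `ι → ℝ`, given by its Lebesgue density. -/
def gaussPi (ι : Type*) [Fintype ι] (σ2 : ℝ) : Measure (ι → ℝ) :=
  volume.withDensity fun x => ENNReal.ofReal
    ((2 * π * σ2) ^ (-(Fintype.card ι : ℝ) / 2) * Real.exp (-(enorm2 x) ^ 2 / (2 * σ2)))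

/-- The Lebesgue density of the `N(0, σ² Q⁻¹)` distribution on `ι → ℝ`
(for `Q` symmetric positive definite). -/
def gaussCovDens {ι : Type*} [Fintype ι] [DecidableEq ι] (σ2 : ℝ) (Q : Matrix ι ι ℝ)
    (x : ι → ℝ) : ℝ :=
  (2 * π * σ2) ^ (-(Fintype.card ι : ℝ) / 2) * Real.sqrt Q.det *
    Real.exp (-(x ⬝ᵥ Q.mulVec x) / (2 * σ2))

/-- The `N(0, σ² Q⁻¹)` distribution on `ι → ℝ` (for `Q` symmetric positive definite),
given by its Lebesgue density. -/
def gaussCov {ι : Type*} [Fintype ι] [DecidableEq ι] (σ2 : ℝ) (Q : Matrix ι ι ℝ) :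
    Measure (ι → ℝ) :=
  volume.withDensity fun x => ENNReal.ofReal (gaussCovDens σ2 Q x)

/-- The positive semidefinite square root of a positive semidefinite matrix
(Mathlib's former `Matrix.PosSemidef.sqrt`, since removed, over `ℝ`). -/
def Matrix.PosSemidef.sqrt {n : Type*} [Fintype n] [DecidableEq n]
    {A : Matrix n n ℝ} (hA : A.PosSemidef) : Matrix n n ℝ :=
  hA.1.eigenvectorUnitary.1 * diagonal (Real.sqrt ∘ hA.1.eigenvalues) *
    (star hA.1.eigenvectorUnitary : Matrix n n ℝ)

open Classical in
/-- Symmetric positive semidefinite square root (junk value `0` off the psd cone). -/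
def msqrt {ι : Type*} [Fintype ι] [DecidableEq ι] (A : Matrix ι ι ℝ) : Matrix ι ι ℝ :=
  if h : A.PosSemidef then h.sqrt else 0

open Classical in
/-- Smallest eigenvalue of a symmetric matrix (junk value `0` otherwise). -/
def lamMin {ι : Type*} [Fintype ι] [DecidableEq ι] (A : Matrix ι ι ℝ) : ℝ :=
  if h : A.IsHermitian then ⨅ i, h.eigenvalues i else 0

open Classical in
/-- Largest eigenvalue of a symmetric matrix (junk value `0` otherwise). -/
def lamMax {ι : Type*} [Fintype ι] [DecidableEq ι] (A : Matrix ι ι ℝ) : ℝ :=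
  if h : A.IsHermitian then ⨆ i, h.eigenvalues i else 0

variable {n k₁ k₂ : ℕ}

/-- First block of columns of the design matrix. -/
def X1 (X : Matrix (Fin n) (Fin k₁ ⊕ Fin k₂) ℝ) : Matrix (Fin n) (Fin k₁) ℝ :=
  X.submatrix id Sum.inl

/-- Second block of columns of the design matrix. -/
def X2 (X : Matrix (Fin n) (Fin k₁ ⊕ Fin k₂) ℝ) : Matrix (Fin n) (Fin k₂) ℝ :=
  X.submatrix id Sum.inr

/-- Unrestricted least squares estimator. -/
def betaU (X : Matrix (Fin n) (Fin k₁ ⊕ Fin k₂) ℝ) (Y : Fin n → ℝ) : (Fin k₁ ⊕ Fin k₂) → ℝ :=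
  (Xᵀ * X)⁻¹.mulVec (Xᵀ.mulVec Y)

/-- Restricted least squares estimator. -/
def betaR (X : Matrix (Fin n) (Fin k₁ ⊕ Fin k₂) ℝ) (Y : Fin n → ℝ) : (Fin k₁ ⊕ Fin k₂) → ℝ :=
  Sum.elim (((X1 X)ᵀ * X1 X)⁻¹.mulVec ((X1 X)ᵀ.mulVec Y)) (fun _ => 0)

/-- Risk estimate of the restricted model. -/
def rR (X : Matrix (Fin n) (Fin k₁ ⊕ Fin k₂) ℝ) (σ2 : ℝ) (Y : Fin n → ℝ) : ℝ :=
  Y ⬝ᵥ Y - betaR X Y ⬝ᵥ (Xᵀ * X).mulVec (betaR X Y) + σ2 * (2 * k₁ - n)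

/-- Risk estimate of the unrestricted model. -/
def rU (X : Matrix (Fin n) (Fin k₁ ⊕ Fin k₂) ℝ) (σ2 : ℝ) (Y : Fin n → ℝ) : ℝ :=
  Y ⬝ᵥ Y - betaU X Y ⬝ᵥ (Xᵀ * X).mulVec (betaU X Y) + σ2 * (2 * (k₁ + k₂) - n)

/-- The model averaging weight `λ̂`. -/
def lamHat (α σ2 : ℝ) (X : Matrix (Fin n) (Fin k₁ ⊕ Fin k₂) ℝ) (Y : Fin n → ℝ) : ℝ :=
  Real.exp (-(α * rR X σ2 Y) / σ2) /
    (Real.exp (-(α * rR X σ2 Y) / σ2) + Real.exp (-(α * rU X σ2 Y) / σ2))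

/-- Leung and Barron's model averaging estimator `β̃`. -/
def mavg (α σ2 : ℝ) (X : Matrix (Fin n) (Fin k₁ ⊕ Fin k₂) ℝ) (Y : Fin n → ℝ) :
    (Fin k₁ ⊕ Fin k₂) → ℝ :=
  lamHat α σ2 X Y • betaR X Y + (1 - lamHat α σ2 X Y) • betaU X Y

/-- Projection on the column space of `X₁`. -/
def projR (X : Matrix (Fin n) (Fin k₁ ⊕ Fin k₂) ℝ) : Matrix (Fin n) (Fin n) ℝ :=
  X1 X * ((X1 X)ᵀ * X1 X)⁻¹ * (X1 X)ᵀ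

/-- Projection on the column space of `X`. -/
def projU (X : Matrix (Fin n) (Fin k₁ ⊕ Fin k₂) ℝ) : Matrix (Fin n) (Fin n) ℝ :=
  X * (Xᵀ * X)⁻¹ * Xᵀ

/-- The distribution `P_{n,β,σ}` of `Y = Xβ + u`, `u ~ N(0, σ² Iₙ)`. -/
def Pmeas (X : Matrix (Fin n) (Fin k₁ ⊕ Fin k₂) ℝ) (β : (Fin k₁ ⊕ Fin k₂) → ℝ) (σ2 : ℝ) :
    Measure (Fin n → ℝ) :=
  (gaussPi (Fin n) σ2).map (fun u => X.mulVec β + u)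

/-- The function `h_{a,b}(ξ) = ξ / (1 + a exp(−ξ²/b))`. -/
def hfun (a b ξ : ℝ) : ℝ := ξ / (1 + a * Real.exp (-ξ ^ 2 / b))

/-- The inverse `g_{a,b}` of `h_{a,b}`. -/
def gfun (a b : ℝ) : ℝ → ℝ := Function.invFun (hfun a b)

open Classical in
/-- `g(‖w‖) w / ‖w‖`, with the convention that this is `0` for `w = 0`. -/
def gdir (a b : ℝ) {ι : Type*} [Fintype ι] (w : ι → ℝ) : ι → ℝ :=
  if w = 0 then 0 else (gfun a b (enorm2 w) / enorm2 w) • w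


/-- The finite-sample density `f_{n,β,σ}` of `√n(β̃ − β)` (Theorem 3 of the paper). -/
def fdens {n k₁ k₂ : ℕ} (X : Matrix (Fin n) (Fin k₁ ⊕ Fin k₂) ℝ)
    (β : (Fin k₁ ⊕ Fin k₂) → ℝ) (σ2 α : ℝ) (t : (Fin k₁ ⊕ Fin k₂) → ℝ) : ℝ :=
  let a := Real.exp (2 * α * k₂)
  let b := σ2 / α
  let S := (X2 X)ᵀ * (1 - projR X) * X2 X
  let w := (Real.sqrt n)⁻¹ • (msqrt S).mulVec ((t ∘ Sum.inr) + Real.sqrt n • (β ∘ Sum.inr))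
  (2 * π * σ2) ^ (-((k₁ : ℝ) + k₂) / 2) * Real.sqrt (((n : ℝ)⁻¹ • (Xᵀ * X)).det) *
    Real.exp (-(enorm2 ((Real.sqrt n)⁻¹ •
        ((msqrt ((X1 X)ᵀ * X1 X)).mulVec (t ∘ Sum.inl) +
          ((msqrt ((X1 X)ᵀ * X1 X))⁻¹ * (X1 X)ᵀ * X2 X).mulVec (t ∘ Sum.inr)))) ^ 2 /
      (2 * σ2)) *
    (1 + Real.exp (-(α / σ2) * gfun a b (enorm2 w) ^ 2 + 2 * α * k₂)) ^ (k₂ : ℕ) *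
    (1 + (2 * α / σ2) * gfun a b (enorm2 w) ^ 2 *
        (1 + Real.exp ((α / σ2) * gfun a b (enorm2 w) ^ 2 - 2 * α * k₂))⁻¹)⁻¹ *
    Real.exp (-(enorm2 (gdir a b w - (msqrt S).mulVec (β ∘ Sum.inr))) ^ 2 / (2 * σ2))

/-- The density `f_{∞,γ}` of the limiting distribution (formula (13) of the paper),
stated for a general symmetric positive definite matrix in place of `Q`. -/
def fInfty {k₁ k₂ : ℕ} (Q : Matrix (Fin k₁ ⊕ Fin k₂) (Fin k₁ ⊕ Fin k₂) ℝ) (σ2 α : ℝ)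
    (γ : Fin k₂ → ℝ) (t : (Fin k₁ ⊕ Fin k₂) → ℝ) : ℝ :=
  let a := Real.exp (2 * α * k₂)
  let b := σ2 / α
  let S := Q.toBlocks₂₂ - Q.toBlocks₂₁ * Q.toBlocks₁₁⁻¹ * Q.toBlocks₁₂
  let w := (msqrt S).mulVec ((t ∘ Sum.inr) + γ)
  (2 * π * σ2) ^ (-((k₁ : ℝ) + k₂) / 2) * Real.sqrt Q.det *
    Real.exp (-(enorm2 ((msqrt Q.toBlocks₁₁).mulVec (t ∘ Sum.inl) +
        ((msqrt Q.toBlocks₁₁)⁻¹ * Q.toBlocks₁₂).mulVec (t ∘ Sum.inr))) ^ 2 / (2 * σ2)) *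
    (1 + Real.exp (-(α / σ2) * gfun a b (enorm2 w) ^ 2 + 2 * α * k₂)) ^ (k₂ : ℕ) *
    (1 + (2 * α / σ2) * gfun a b (enorm2 w) ^ 2 *
        (1 + Real.exp ((α / σ2) * gfun a b (enorm2 w) ^ 2 - 2 * α * k₂))⁻¹)⁻¹ *
    Real.exp (-(enorm2 (gdir a b w - (msqrt S).mulVec γ)) ^ 2 / (2 * σ2))


/-- The limiting law (12): the distribution of
`B_∞γ + C_∞Z₁ + [1 + exp(2αk₂) exp(−α‖Z₂ + (Q₂₂ − Q₂₁Q₁₁⁻¹Q₁₂)^{1/2}γ‖²/σ²)]⁻¹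
  · (D_∞Z₂ − B_∞γ)` with `Z₁ ~ N(0, σ²I_{k₁})`, `Z₂ ~ N(0, σ²I_{k₂})` independent. -/
def limitLaw {k₁ k₂ : ℕ} (Q : Matrix (Fin k₁ ⊕ Fin k₂) (Fin k₁ ⊕ Fin k₂) ℝ) (σ2 α : ℝ)
    (γ : Fin k₂ → ℝ) : Measure ((Fin k₁ ⊕ Fin k₂) → ℝ) :=
  ((gaussPi (Fin k₁) σ2).prod (gaussPi (Fin k₂) σ2)).map
    (fun Z : (Fin k₁ → ℝ) × (Fin k₂ → ℝ) =>
      (fromRows (Q.toBlocks₁₁⁻¹ * Q.toBlocks₁₂) (-1)).mulVec γ +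
      (fromRows (msqrt Q.toBlocks₁₁)⁻¹ 0).mulVec Z.1 +
      (1 + Real.exp (2 * α * k₂) *
          Real.exp (-α * (enorm2 (Z.2 +
            (msqrt (Q.toBlocks₂₂ - Q.toBlocks₂₁ * Q.toBlocks₁₁⁻¹ * Q.toBlocks₁₂)).mulVec
              γ)) ^ 2 / σ2))⁻¹ •
        ((fromRows
            (-(Q.toBlocks₁₁⁻¹ * Q.toBlocks₁₂ *
              (msqrt (Q.toBlocks₂₂ - Q.toBlocks₂₁ * Q.toBlocks₁₁⁻¹ * Q.toBlocks₁₂))⁻¹))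
            ((msqrt (Q.toBlocks₂₂ - Q.toBlocks₂₁ * Q.toBlocks₁₁⁻¹ * Q.toBlocks₁₂))⁻¹)).mulVec
            Z.2 -
          (fromRows (Q.toBlocks₁₁⁻¹ * Q.toBlocks₁₂) (-1)).mulVec γ))


lemma aux_enorm2_sq {ι : Type*} [Fintype ι] (v : ι → ℝ) : enorm2 v ^ 2 = v ⬝ᵥ v := by
  unfold enorm2
  rw [Real.sq_sqrt (Finset.sum_nonneg fun i _ => sq_nonneg _)]
  simp [dotProduct, sq]

lemma aux_enorm2_norm {ι : Type*} [Fintype ι] (v : ι → ℝ) :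
    enorm2 v = ‖(WithLp.toLp 2 v : EuclideanSpace ℝ ι)‖ := by
  simp [enorm2, EuclideanSpace.norm_eq]

lemma aux_enorm2_nonneg {ι : Type*} [Fintype ι] (v : ι → ℝ) : 0 ≤ enorm2 v :=
  Real.sqrt_nonneg _

lemma aux_enorm2_add {ι : Type*} [Fintype ι] (v w : ι → ℝ) :
    enorm2 (v + w) ≤ enorm2 v + enorm2 w := by
  simp only [aux_enorm2_norm, WithLp.toLp_add]
  exact norm_add_le _ _

lemma aux_enorm2_smul {ι : Type*} [Fintype ι] (c : ℝ) (v : ι → ℝ) :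
    enorm2 (c • v) = |c| * enorm2 v := by
  simp only [aux_enorm2_norm, WithLp.toLp_smul, norm_smul, Real.norm_eq_abs]

lemma aux_enorm2_neg {ι : Type*} [Fintype ι] (v : ι → ℝ) :
    enorm2 (-v) = enorm2 v := by
  simp [enorm2]

lemma aux_msqrt_mul {ι : Type*} [Fintype ι] [DecidableEq ι] {A : Matrix ι ι ℝ}
    (hA : A.PosSemidef) : msqrt A * msqrt A = A := by
  have h1 := hA.1.spectral_theorem
  rw [Unitary.conjStarAlgAut_apply] at h1
  have h2 : (star (hA.1.eigenvectorUnitary : Matrix ι ι ℝ)) *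
      (hA.1.eigenvectorUnitary : Matrix ι ι ℝ) = 1 := Unitary.coe_star_mul_self _
  unfold msqrt
  rw [dif_pos hA]
  unfold Matrix.PosSemidef.sqrt
  conv_rhs => rw [h1]
  generalize hA.1.eigenvectorUnitary = U at *
  have h3 : diagonal (Real.sqrt ∘ hA.1.eigenvalues) * diagonal (Real.sqrt ∘ hA.1.eigenvalues)
      = diagonal (RCLike.ofReal ∘ hA.1.eigenvalues : ι → ℝ) := by
    rw [diagonal_mul_diagonal]
    congr 1
    funext i
    simp [Real.mul_self_sqrt (hA.eigenvalues_nonneg i)]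
  rw [← h3]
  calc _ = U.1 * diagonal (Real.sqrt ∘ hA.1.eigenvalues) * (star U.1 * U.1) *
        diagonal (Real.sqrt ∘ hA.1.eigenvalues) * star U.1 := by
        simp only [Matrix.mul_assoc]
    _ = _ := by
      rw [h2]; simp only [Matrix.mul_assoc, Matrix.mul_one]

lemma aux_msqrt_symm {ι : Type*} [Fintype ι] [DecidableEq ι] {A : Matrix ι ι ℝ}
    (hA : A.PosSemidef) : (msqrt A)ᵀ = msqrt A := by
  unfold msqrt
  rw [dif_pos hA]
  unfold Matrix.PosSemidef.sqrt
  generalize hA.1.eigenvectorUnitary = U at *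
  simp [Matrix.transpose_mul, Matrix.mul_assoc, star_eq_conjTranspose, conjTranspose_eq_transpose_of_trivial]

lemma aux_msqrt_quad {ι : Type*} [Fintype ι] [DecidableEq ι] {A : Matrix ι ι ℝ}
    (hA : A.PosSemidef) (v : ι → ℝ) : enorm2 (msqrt A *ᵥ v) ^ 2 = v ⬝ᵥ A *ᵥ v := by
  rw [aux_enorm2_sq]
  conv_rhs => rw [← aux_msqrt_mul hA, ← mulVec_mulVec, dotProduct_mulVec, ← mulVec_transpose,
    aux_msqrt_symm hA]

lemma aux_msqrt_inv {ι : Type*} [Fintype ι] [DecidableEq ι] {A : Matrix ι ι ℝ}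
    (hA : A.PosDef) : (msqrt A)⁻¹ = msqrt A * A⁻¹ := by
  apply Matrix.inv_eq_right_inv
  rw [← Matrix.mul_assoc, aux_msqrt_mul hA.posSemidef]
  exact Matrix.mul_nonsing_inv _ ((Matrix.isUnit_iff_isUnit_det _).1 hA.isUnit)

lemma aux_first {ι κ : Type*} [Fintype ι] [DecidableEq ι] [Fintype κ] {A : Matrix ι ι ℝ}
    (hA : A.PosDef) (B : Matrix ι κ ℝ) (x : ι → ℝ) (y : κ → ℝ) :
    enorm2 (msqrt A *ᵥ x + ((msqrt A)⁻¹ * B) *ᵥ y) ^ 2 =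
      (x + (A⁻¹ * B) *ᵥ y) ⬝ᵥ A *ᵥ (x + (A⁻¹ * B) *ᵥ y) := by
  rw [← aux_msqrt_quad hA.posSemidef, aux_msqrt_inv hA, Matrix.mul_assoc, ← mulVec_mulVec,
    ← mulVec_add]

/-- Schur complement. -/
def auxSC {k l : ℕ} (Q : Matrix (Fin k ⊕ Fin l) (Fin k ⊕ Fin l) ℝ) : Matrix (Fin l) (Fin l) ℝ :=
  Q.toBlocks₂₂ - Q.toBlocks₂₁ * Q.toBlocks₁₁⁻¹ * Q.toBlocks₁₂

lemma aux_posDef11 {k l : ℕ} {Q : Matrix (Fin k ⊕ Fin l) (Fin k ⊕ Fin l) ℝ} (hQ : Q.PosDef) :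
    Q.toBlocks₁₁.PosDef := by
  have : Q.toBlocks₁₁ = Q.submatrix Sum.inl Sum.inl := rfl
  rw [this]
  exact hQ.submatrix Sum.inl_injective

lemma aux_t21 {k l : ℕ} {Q : Matrix (Fin k ⊕ Fin l) (Fin k ⊕ Fin l) ℝ} (hQ : Q.IsHermitian) :
    Q.toBlocks₂₁ = Q.toBlocks₁₂ᴴ := by
  ext i j
  have := congrFun (congrFun hQ (Sum.inr i)) (Sum.inl j)
  simpa [toBlocks₂₁, toBlocks₁₂] using this.symm

lemma aux_schur {k l : ℕ} {Q : Matrix (Fin k ⊕ Fin l) (Fin k ⊕ Fin l) ℝ} (hQ : Q.PosDef)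
    (x : Fin k → ℝ) (y : Fin l → ℝ) :
    Sum.elim x y ⬝ᵥ Q *ᵥ Sum.elim x y =
      (x + (Q.toBlocks₁₁⁻¹ * Q.toBlocks₁₂) *ᵥ y) ⬝ᵥ
        Q.toBlocks₁₁ *ᵥ (x + (Q.toBlocks₁₁⁻¹ * Q.toBlocks₁₂) *ᵥ y) + y ⬝ᵥ auxSC Q *ᵥ y := by
  have h11 := aux_posDef11 hQ
  have : Invertible Q.toBlocks₁₁ := h11.isUnit.invertible
  have := schur_complement_eq₁₁ Q.toBlocks₁₂ Q.toBlocks₂₂ x y h11.1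
  rw [← aux_t21 hQ.1, fromBlocks_toBlocks] at this
  simpa [auxSC, dotProduct_mulVec] using this

lemma aux_SC_psd {k l : ℕ} {Q : Matrix (Fin k ⊕ Fin l) (Fin k ⊕ Fin l) ℝ} (hQ : Q.PosDef) :
    (auxSC Q).PosSemidef := by
  have h11 := aux_posDef11 hQ
  have : Invertible Q.toBlocks₁₁ := h11.isUnit.invertible
  have := (PosDef.fromBlocks₁₁ Q.toBlocks₁₂ Q.toBlocks₂₂ h11).1
  rw [← aux_t21 hQ.1, fromBlocks_toBlocks] at this
  exact this hQ.posSemidef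

lemma aux_gdir (a b : ℝ) {ι : Type*} [Fintype ι] (w : ι → ℝ) :
    gdir a b w = (gfun a b (enorm2 w) / enorm2 w) • w := by
  unfold gdir
  split_ifs with h
  · simp [h]
  · rfl

lemma aux_blocks11 {n k l : ℕ} (X : Matrix (Fin n) (Fin k ⊕ Fin l) ℝ) (c : ℝ) :
    (c • (Xᵀ * X)).toBlocks₁₁ = c • ((X1 X)ᵀ * X1 X) := rfl
lemma aux_blocks12 {n k l : ℕ} (X : Matrix (Fin n) (Fin k ⊕ Fin l) ℝ) (c : ℝ) :
    (c • (Xᵀ * X)).toBlocks₁₂ = c • ((X1 X)ᵀ * X2 X) := rfl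
lemma aux_blocks21 {n k l : ℕ} (X : Matrix (Fin n) (Fin k ⊕ Fin l) ℝ) (c : ℝ) :
    (c • (Xᵀ * X)).toBlocks₂₁ = c • ((X2 X)ᵀ * X1 X) := rfl
lemma aux_blocks22 {n k l : ℕ} (X : Matrix (Fin n) (Fin k ⊕ Fin l) ℝ) (c : ℝ) :
    (c • (Xᵀ * X)).toBlocks₂₂ = c • ((X2 X)ᵀ * X2 X) := rfl

lemma aux_smul_inv {m : Type*} [Fintype m] [DecidableEq m] {A : Matrix m m ℝ} (hA : A.PosDef)
    {c : ℝ} (hc : c ≠ 0) : (c • A)⁻¹ = c⁻¹ • A⁻¹ := by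
  apply Matrix.inv_eq_right_inv
  rw [smul_mul_smul_comm, mul_inv_cancel₀ hc, one_smul]
  exact Matrix.mul_nonsing_inv _ ((Matrix.isUnit_iff_isUnit_det _).1 hA.isUnit)

lemma aux_SC_eq {n k l : ℕ} (X : Matrix (Fin n) (Fin k ⊕ Fin l) ℝ) {c : ℝ} (hc : c ≠ 0)
    (hA : ((X1 X)ᵀ * X1 X).PosDef) :
    auxSC (c • (Xᵀ * X)) = c • ((X2 X)ᵀ * (1 - projR X) * X2 X) := by
  unfold auxSC
  rw [aux_blocks11, aux_blocks12, aux_blocks21, aux_blocks22, aux_smul_inv hA hc]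
  simp only [projR, Matrix.mul_sub, Matrix.sub_mul, Matrix.mul_one, smul_sub, Matrix.smul_mul,
    Matrix.mul_smul, smul_smul, Matrix.mul_assoc]
  congr 2
  field_simp

lemma aux_fdens_eq {n k l : ℕ} (X : Matrix (Fin n) (Fin k ⊕ Fin l) ℝ) (hn : 0 < n)
    (hQ : ((n : ℝ)⁻¹ • (Xᵀ * X)).PosDef) (β : Fin k ⊕ Fin l → ℝ) (σ2 α : ℝ)
    (t : Fin k ⊕ Fin l → ℝ) :
    fdens X β σ2 α t =
      fInfty ((n : ℝ)⁻¹ • (Xᵀ * X)) σ2 α (Real.sqrt n • (β ∘ Sum.inr)) t := by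
  have hn' : (0 : ℝ) < n := by exact_mod_cast hn
  have hc : ((n : ℝ)⁻¹) ≠ 0 := by positivity
  have hA' := aux_posDef11 hQ
  have hA : ((X1 X)ᵀ * X1 X).PosDef := by
    have := hA'.smul hn'
    rwa [aux_blocks11, smul_smul, mul_inv_cancel₀ hn'.ne', one_smul] at this
  have hS' := aux_SC_psd hQ
  have hSe := aux_SC_eq X hc hA
  have hS : ((X2 X)ᵀ * (1 - projR X) * X2 X).PosSemidef := by
    have := hS'.smul hn'.le
    rwa [hSe, smul_smul, mul_inv_cancel₀ hn'.ne', one_smul] at this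
  have key : ∀ v, enorm2 ((Real.sqrt n)⁻¹ • (msqrt ((X2 X)ᵀ * (1 - projR X) * X2 X)) *ᵥ v) =
      enorm2 (msqrt (auxSC ((n : ℝ)⁻¹ • (Xᵀ * X))) *ᵥ v) := by
    intro v
    rw [← sq_eq_sq₀ (aux_enorm2_nonneg _) (aux_enorm2_nonneg _), aux_msqrt_quad hS', hSe,
      aux_enorm2_smul, mul_pow, aux_msqrt_quad hS, sq_abs, inv_pow, Real.sq_sqrt hn'.le,
      smul_mulVec, dotProduct_smul, smul_eq_mul]
  have first : enorm2 ((Real.sqrt n)⁻¹ • ((msqrt ((X1 X)ᵀ * X1 X)).mulVec (t ∘ Sum.inl) +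
          ((msqrt ((X1 X)ᵀ * X1 X))⁻¹ * (X1 X)ᵀ * X2 X).mulVec (t ∘ Sum.inr))) ^ 2 =
      enorm2 ((msqrt ((n : ℝ)⁻¹ • (Xᵀ * X)).toBlocks₁₁).mulVec (t ∘ Sum.inl) +
        ((msqrt ((n : ℝ)⁻¹ • (Xᵀ * X)).toBlocks₁₁)⁻¹ *
          ((n : ℝ)⁻¹ • (Xᵀ * X)).toBlocks₁₂).mulVec (t ∘ Sum.inr)) ^ 2 := by
    rw [aux_first hA', aux_enorm2_smul, mul_pow, Matrix.mul_assoc, aux_first hA, sq_abs, inv_pow,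
      Real.sq_sqrt hn'.le, aux_blocks11, aux_blocks12, aux_smul_inv hA hc, Matrix.smul_mul, Matrix.mul_smul,
      smul_smul, inv_mul_cancel₀ hc, one_smul, smul_mulVec, dotProduct_smul, smul_eq_mul]
  have third : ∀ κ : ℝ, enorm2 (κ • ((Real.sqrt n)⁻¹ • (msqrt ((X2 X)ᵀ * (1 - projR X) * X2 X)) *ᵥ
        ((t ∘ Sum.inr) + Real.sqrt n • (β ∘ Sum.inr))) -
        (msqrt ((X2 X)ᵀ * (1 - projR X) * X2 X)) *ᵥ (β ∘ Sum.inr)) =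
      enorm2 (κ • (msqrt (auxSC ((n : ℝ)⁻¹ • (Xᵀ * X)))) *ᵥ
        ((t ∘ Sum.inr) + Real.sqrt n • (β ∘ Sum.inr)) -
        (msqrt (auxSC ((n : ℝ)⁻¹ • (Xᵀ * X)))) *ᵥ (Real.sqrt n • (β ∘ Sum.inr))) := by
    intro κ
    have hs : Real.sqrt n ≠ 0 := by positivity
    rw [← mulVec_smul (msqrt (auxSC _)) κ, ← mulVec_sub (msqrt (auxSC _)), ← key]
    congr 1
    rw [mulVec_sub, smul_sub, mulVec_smul, mulVec_smul, smul_smul _ _ (_ *ᵥ (β ∘ Sum.inr)),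
      inv_mul_cancel₀ hs, one_smul, smul_comm]
  unfold auxSC at third key
  unfold fdens fInfty
  simp only [aux_gdir]
  rw [first, key, third]

lemma aux_hfun_strictMono {a b : ℝ} (ha : 0 < a) (hb : 0 < b) : StrictMono (hfun a b) := by
  apply strictMono_of_odd_strictMonoOn_nonneg
  · intro x
    simp [hfun, neg_div]
  · intro x hx y hy hxy
    have hx : 0 ≤ x := hx
    have h1 : Real.exp (-y ^ 2 / b) ≤ Real.exp (-x ^ 2 / b) := by
      apply Real.exp_le_exp.2
      gcongr
    have h2 : 1 + a * Real.exp (-y ^ 2 / b) ≤ 1 + a * Real.exp (-x ^ 2 / b) := by gcongr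
    have h3 : 0 < 1 + a * Real.exp (-y ^ 2 / b) := by positivity
    calc hfun a b x ≤ x / (1 + a * Real.exp (-y ^ 2 / b)) := by
          unfold hfun; gcongr
      _ < hfun a b y := by unfold hfun; gcongr

lemma aux_hfun_zero (a b : ℝ) : hfun a b 0 = 0 := by simp [hfun]

lemma aux_hfun_surj {a b : ℝ} (ha : 0 < a) (hb : 0 < b) : Function.Surjective (hfun a b) := by
  have hden : ∀ x, 0 < 1 + a * Real.exp (-x ^ 2 / b) := fun x => by positivity
  have hcont : Continuous (hfun a b) := by
    unfold hfun
    exact continuous_id.div (by fun_prop) (fun x => (hden x).ne')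
  have htop : Tendsto (hfun a b) atTop atTop := by
    have h0 : Tendsto (fun x : ℝ => x / (1 + a)) atTop atTop :=
      tendsto_id.atTop_div_const (by positivity)
    refine tendsto_atTop_mono' _ ?_ h0
    filter_upwards [eventually_ge_atTop 0] with x hx
    unfold hfun
    have : Real.exp (-x ^ 2 / b) ≤ 1 := by
      apply Real.exp_le_one_iff.2
      rw [neg_div]
      have : 0 ≤ x ^ 2 / b := by positivity
      linarith
    have h3 := hden x
    have h4 : 1 + a * Real.exp (-x ^ 2 / b) ≤ 1 + a := by nlinarith
    gcongr
  have hodd : ∀ x, hfun a b (-x) = - hfun a b x := fun x => by simp [hfun, neg_div]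
  have hbot : Tendsto (hfun a b) atBot atBot := by
    have h1 : Tendsto (fun x => - hfun a b (-x)) atBot atBot :=
      tendsto_neg_atTop_atBot.comp (htop.comp tendsto_neg_atBot_atTop)
    refine h1.congr fun x => ?_
    rw [hodd, neg_neg]
  exact hcont.surjective htop hbot

lemma aux_h_g {a b : ℝ} (ha : 0 < a) (hb : 0 < b) (x : ℝ) : hfun a b (gfun a b x) = x :=
  Function.invFun_eq (aux_hfun_surj ha hb x)

lemma aux_g_mono {a b : ℝ} (ha : 0 < a) (hb : 0 < b) : Monotone (gfun a b) := by
  intro x y hxy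
  by_contra! h
  have := aux_hfun_strictMono ha hb h
  rw [aux_h_g ha hb, aux_h_g ha hb] at this
  linarith

lemma aux_g_nonneg {a b : ℝ} (ha : 0 < a) (hb : 0 < b) {x : ℝ} (hx : 0 ≤ x) :
    0 ≤ gfun a b x := by
  by_contra! h
  have := aux_hfun_strictMono ha hb h
  rw [aux_h_g ha hb, aux_hfun_zero] at this
  linarith

lemma aux_g_eq {a b : ℝ} (ha : 0 < a) (hb : 0 < b) (x : ℝ) :
    gfun a b x = x * (1 + a * Real.exp (-gfun a b x ^ 2 / b)) := by
  have h := aux_h_g ha hb x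
  have hden : 0 < 1 + a * Real.exp (-gfun a b x ^ 2 / b) := by positivity
  unfold hfun at h
  rw [div_eq_iff hden.ne'] at h
  exact h

lemma aux_g_ge {a b : ℝ} (ha : 0 < a) (hb : 0 < b) {x : ℝ} (hx : 0 ≤ x) : x ≤ gfun a b x := by
  rw [aux_g_eq ha hb x]
  have : 0 ≤ a * Real.exp (-gfun a b x ^ 2 / b) := by positivity
  nlinarith

/-- Bound for `g(x) - x`. -/
def auxPhi (a b x : ℝ) : ℝ := x * (a * Real.exp (-x ^ 2 / b))

lemma aux_g_sub {a b : ℝ} (ha : 0 < a) (hb : 0 < b) {x : ℝ} (hx : 0 ≤ x) :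
    gfun a b x - x ≤ auxPhi a b x := by
  have h1 := aux_g_eq ha hb x
  have h2 := aux_g_ge ha hb hx
  have h3 : Real.exp (-gfun a b x ^ 2 / b) ≤ Real.exp (-x ^ 2 / b) := by
    apply Real.exp_le_exp.2
    gcongr
  have h4 : gfun a b x - x = x * (a * Real.exp (-gfun a b x ^ 2 / b)) := by
    linear_combination h1
  rw [h4]
  unfold auxPhi
  gcongr

lemma aux_exp_neg_le {y : ℝ} (hy : 0 ≤ y) : Real.exp (-y) ≤ (1 + y)⁻¹ := by
  rw [Real.exp_neg]
  have := Real.add_one_le_exp y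
  gcongr
  linarith

lemma aux_phi_le {a b : ℝ} (ha : 0 < a) (hb : 0 < b) {x : ℝ} (hx : 0 ≤ x) :
    auxPhi a b x ≤ a * (1 + b) := by
  have h1 := aux_exp_neg_le (y := x ^ 2 / b) (by positivity)
  unfold auxPhi
  rw [neg_div]
  calc x * (a * Real.exp (-(x ^ 2 / b))) ≤ x * (a * (1 + x ^ 2 / b)⁻¹) := by gcongr
    _ = a * (x / (1 + x ^ 2 / b)) := by ring
    _ ≤ a * (1 + b) := by
      gcongr
      rw [div_le_iff₀ (by positivity)]
      have : (1 + b) * (1 + x ^ 2 / b) = 1 + b + x ^ 2 / b + x ^ 2 := by field_simp; ring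
      rw [this]
      have : 0 ≤ x ^ 2 / b := by positivity
      nlinarith [sq_nonneg (x - 1)]

lemma aux_phi_tendsto {a b : ℝ} (ha : 0 < a) (hb : 0 < b) :
    Tendsto (auxPhi a b) atTop (𝓝 0) := by
  have h0 : Tendsto (fun x : ℝ => a * b * x⁻¹) atTop (𝓝 0) := by
    simpa using tendsto_inv_atTop_zero.const_mul (a * b)
  refine squeeze_zero' ?_ ?_ h0
  · filter_upwards [eventually_ge_atTop 0] with x hx
    unfold auxPhi; positivity
  · filter_upwards [eventually_gt_atTop 0] with x hx
    have h1 := aux_exp_neg_le (y := x ^ 2 / b) (by positivity)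
    have h2 : (1 + x ^ 2 / b)⁻¹ ≤ (x ^ 2 / b)⁻¹ := by
      gcongr; linarith
    unfold auxPhi
    rw [neg_div]
    calc x * (a * Real.exp (-(x ^ 2 / b))) ≤ x * (a * (x ^ 2 / b)⁻¹) := by
          gcongr; exact h1.trans h2
      _ = a * b * x⁻¹ := by field_simp

lemma aux_gdir_sub {a b : ℝ} (ha : 0 < a) (hb : 0 < b) {ι : Type*} [Fintype ι] (w : ι → ℝ) :
    enorm2 (gdir a b w - w) ≤ auxPhi a b (enorm2 w) := by
  have hx := aux_enorm2_nonneg w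
  rw [aux_gdir]
  have h1 : (gfun a b (enorm2 w) / enorm2 w) • w - w =
      (gfun a b (enorm2 w) / enorm2 w - 1) • w := by
    rw [sub_smul, one_smul]
  rw [h1, aux_enorm2_smul]
  rcases hx.eq_or_lt with h | h
  · rw [← h]; simp [auxPhi]
  · refine le_trans (le_of_eq ?_) (aux_g_sub ha hb hx)
    rw [← abs_of_nonneg (sub_nonneg.2 (aux_g_ge ha hb hx))]
    have h2 : gfun a b (enorm2 w) - enorm2 w =
        (gfun a b (enorm2 w) / enorm2 w - 1) * enorm2 w := by
      field_simp
    rw [h2, abs_mul, abs_of_pos h]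

/-- The `k₂`-th power factor. -/
def auxA (α σ2 : ℝ) (l : ℕ) (G : ℝ) : ℝ := (1 + Real.exp (-(α / σ2) * G ^ 2 + 2 * α * l)) ^ l
/-- The Jacobian factor. -/
def auxB (α σ2 : ℝ) (l : ℕ) (G : ℝ) : ℝ :=
  (1 + (2 * α / σ2) * G ^ 2 * (1 + Real.exp ((α / σ2) * G ^ 2 - 2 * α * l))⁻¹)⁻¹

lemma aux_A_le {α σ2 : ℝ} (hα : 0 < α) (hs : 0 < σ2) (l : ℕ) (G : ℝ) :
    auxA α σ2 l G ≤ (1 + Real.exp (2 * α * l)) ^ l := by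
  unfold auxA
  have : 0 ≤ (α / σ2) * G ^ 2 := by positivity
  gcongr
  linarith

lemma aux_A_nonneg (α σ2 : ℝ) (l : ℕ) (G : ℝ) : 0 ≤ auxA α σ2 l G := by
  unfold auxA; positivity

lemma aux_B_le {α σ2 : ℝ} (hα : 0 < α) (hs : 0 < σ2) (l : ℕ) (G : ℝ) :
    auxB α σ2 l G ≤ 1 := by
  unfold auxB
  apply inv_le_one_of_one_le₀
  have : 0 ≤ (2 * α / σ2) * G ^ 2 * (1 + Real.exp ((α / σ2) * G ^ 2 - 2 * α * l))⁻¹ := by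
    positivity
  linarith

lemma aux_B_nonneg {α σ2 : ℝ} (hα : 0 < α) (hs : 0 < σ2) (l : ℕ) (G : ℝ) :
    0 ≤ auxB α σ2 l G := by
  unfold auxB; positivity

lemma aux_y_tendsto {α σ2 : ℝ} (hα : 0 < α) (hs : 0 < σ2) :
    Tendsto (fun G : ℝ => (α / σ2) * G ^ 2) atTop atTop :=
  (tendsto_pow_atTop two_ne_zero).const_mul_atTop (by positivity)

lemma aux_A_tendsto {α σ2 : ℝ} (hα : 0 < α) (hs : 0 < σ2) (l : ℕ) :
    Tendsto (auxA α σ2 l) atTop (𝓝 1) := by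
  have h1 : Tendsto (fun G : ℝ => -(α / σ2) * G ^ 2 + 2 * α * l) atTop atBot := by
    apply tendsto_atBot_add_const_right
    have := tendsto_neg_atTop_atBot.comp (aux_y_tendsto hα hs)
    refine this.congr fun G => ?_
    simp
  have h2 := ((Real.tendsto_exp_atBot.comp h1).const_add 1).pow l
  have h3 : auxA α σ2 l = fun G => (1 + Real.exp (-(α / σ2) * G ^ 2 + 2 * α * l)) ^ l := rfl
  rw [h3]
  simpa [Function.comp_def] using h2

lemma aux_B_tendsto {α σ2 : ℝ} (hα : 0 < α) (hs : 0 < σ2) (l : ℕ) :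
    Tendsto (auxB α σ2 l) atTop (𝓝 1) := by
  have h1 : Tendsto (fun G : ℝ => (2 * Real.exp (2 * α * l)) *
      (((α / σ2) * G ^ 2) ^ 1 * Real.exp (-((α / σ2) * G ^ 2)))) atTop (𝓝 0) := by
    simpa using ((Real.tendsto_pow_mul_exp_neg_atTop_nhds_zero 1).comp
      (aux_y_tendsto hα hs)).const_mul (2 * Real.exp (2 * α * l))
  have h2 : Tendsto (fun G : ℝ => (2 * α / σ2) * G ^ 2 *
      (1 + Real.exp ((α / σ2) * G ^ 2 - 2 * α * l))⁻¹) atTop (𝓝 0) := by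
    refine squeeze_zero (fun G => by positivity) (fun G => ?_) h1
    have h3 : (1 + Real.exp ((α / σ2) * G ^ 2 - 2 * α * l))⁻¹ ≤
        Real.exp (2 * α * l) * Real.exp (-((α / σ2) * G ^ 2)) := by
      rw [← Real.exp_add]
      have : 2 * α * l + -((α / σ2) * G ^ 2) = -((α / σ2) * G ^ 2 - 2 * α * l) := by ring
      rw [this, Real.exp_neg]
      gcongr
      linarith
    calc _ ≤ (2 * α / σ2) * G ^ 2 * (Real.exp (2 * α * l) * Real.exp (-((α / σ2) * G ^ 2))) := by
          gcongr
      _ = _ := by ring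
  have h4 := (h2.const_add 1).inv₀ (by norm_num)
  rw [add_zero, inv_one] at h4
  exact h4

lemma aux_gaussPi_univ (ι : Type*) [Fintype ι] {σ2 : ℝ} (hs : 0 < σ2) :
    gaussPi ι σ2 Set.univ = 1 := by
  unfold gaussPi
  rw [withDensity_apply _ MeasurableSet.univ, Measure.restrict_univ]
  have hfac : ∀ x : ι → ℝ, Real.exp (-(enorm2 x) ^ 2 / (2 * σ2)) =
      ∏ i, Real.exp (-(1 / (2 * σ2)) * x i ^ 2) := by
    intro x
    rw [← Real.exp_sum, aux_enorm2_sq, ← Finset.mul_sum]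
    congr 1
    simp only [dotProduct, sq]
    ring
  have hInt : Integrable (fun x : ι → ℝ => ∏ i, Real.exp (-(1 / (2 * σ2)) * x i ^ 2)) :=
    Integrable.fintype_prod (fun i => integrable_exp_neg_mul_sq (by positivity))
  simp_rw [hfac]
  rw [← ofReal_integral_eq_lintegral_ofReal (hInt.const_mul _)
    (Eventually.of_forall fun x => by positivity), integral_const_mul,
    integral_fintype_prod_volume_eq_pow (fun y : ℝ => Real.exp (-(1 / (2 * σ2)) * y ^ 2)),
    integral_gaussian]
  have : π / (1 / (2 * σ2)) = 2 * π * σ2 := by field_simp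
  rw [this, Real.sqrt_eq_rpow, ← Real.rpow_natCast, ← Real.rpow_mul (by positivity),
    ← Real.rpow_add (by positivity)]
  have : -(Fintype.card ι : ℝ) / 2 + 1 / 2 * (Fintype.card ι : ℝ) = 0 := by ring
  rw [this]; simp

lemma aux_Pmeas_prob {n k l : ℕ} (X : Matrix (Fin n) (Fin k ⊕ Fin l) ℝ) (β : Fin k ⊕ Fin l → ℝ)
    {σ2 : ℝ} (hs : 0 < σ2) : IsProbabilityMeasure (Pmeas X β σ2) := by
  constructor
  unfold Pmeas
  rw [Measure.map_apply (by fun_prop) MeasurableSet.univ]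
  simpa using aux_gaussPi_univ (Fin n) hs

lemma aux_lower {ι : Type*} [Fintype ι] [DecidableEq ι] {Q : Matrix ι ι ℝ} (hQ : Q.PosDef) :
    ∃ c : ℝ, 0 < c ∧ ∀ t : ι → ℝ, c * (t ⬝ᵥ t) ≤ t ⬝ᵥ Q *ᵥ t := by
  have hc : Continuous fun t : ι → ℝ => t ⬝ᵥ Q *ᵥ t := by fun_prop
  have hK : IsCompact (Metric.sphere (0 : EuclideanSpace ℝ ι) 1) := isCompact_sphere _ _
  have hf : Continuous fun t : EuclideanSpace ℝ ι => (WithLp.ofLp t) ⬝ᵥ Q *ᵥ (WithLp.ofLp t) :=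
    hc.comp (by fun_prop)
  rcases (Metric.sphere (0 : EuclideanSpace ℝ ι) 1).eq_empty_or_nonempty with he | hne
  · refine ⟨1, one_pos, fun t => ?_⟩
    have ht : t = 0 := by
      by_contra h
      have h1 : ‖(WithLp.toLp 2 t : EuclideanSpace ℝ ι)‖ ≠ 0 := by
        simpa using h
      have : (‖(WithLp.toLp 2 t : EuclideanSpace ℝ ι)‖⁻¹ • (WithLp.toLp 2 t) : EuclideanSpace ℝ ι)
          ∈ Metric.sphere (0 : EuclideanSpace ℝ ι) 1 := by
        simp [norm_smul, h1]
      rw [he] at this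
      exact this
    simp [ht]
  · obtain ⟨t0, ht0, hmin⟩ := hK.exists_isMinOn hne hf.continuousOn
    have ht0n : ‖t0‖ = 1 := by simpa using ht0
    have ht0' : WithLp.ofLp t0 ≠ 0 := by
      intro h
      have : t0 = 0 := by ext i; simpa using congrFun h i
      rw [this] at ht0n; simp at ht0n
    refine ⟨_, by simpa using hQ.dotProduct_mulVec_pos ht0', fun t => ?_⟩
    rcases eq_or_ne t 0 with h | h
    · simp [h]
    · have hr : enorm2 t ≠ 0 := by
        rw [aux_enorm2_norm]; simpa using h
      have hmem : (WithLp.toLp 2 ((enorm2 t)⁻¹ • t) : EuclideanSpace ℝ ι) ∈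
          Metric.sphere (0 : EuclideanSpace ℝ ι) 1 := by
        rw [mem_sphere_zero_iff_norm, ← aux_enorm2_norm, aux_enorm2_smul, abs_inv,
          abs_of_nonneg (aux_enorm2_nonneg t), inv_mul_cancel₀ hr]
      have h2 := isMinOn_iff.1 hmin _ hmem
      simp only [mulVec_smul, dotProduct_smul, smul_dotProduct, smul_eq_mul] at h2
      rw [← aux_enorm2_sq]
      have h3 : 0 < enorm2 t ^ 2 := by positivity
      calc _ ≤ ((enorm2 t)⁻¹ * ((enorm2 t)⁻¹ * t ⬝ᵥ Q *ᵥ t)) * enorm2 t ^ 2 := by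
            gcongr
        _ = _ := by field_simp

lemma aux_lower_ev {ι : Type*} [Fintype ι] [DecidableEq ι] {Q : Matrix ι ι ℝ} (hQ : Q.PosDef)
    {Qn : ℕ → Matrix ι ι ℝ} (hlim : Tendsto Qn atTop (𝓝 Q)) :
    ∃ c : ℝ, 0 < c ∧ ∀ᶠ n in atTop, ∀ t : ι → ℝ, c * (t ⬝ᵥ t) ≤ t ⬝ᵥ Qn n *ᵥ t := by
  obtain ⟨c, hc, h⟩ := aux_lower hQ
  refine ⟨c / 2, by positivity, ?_⟩
  have hcont : Continuous fun M : Matrix ι ι ℝ => ∑ i, ∑ j, |(M - Q) i j| := by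
    simp only [Matrix.sub_apply]
    fun_prop
  have h0 : Tendsto (fun n => ∑ i, ∑ j, |(Qn n - Q) i j|) atTop (𝓝 0) := by
    have := (hcont.tendsto Q).comp hlim
    simpa [Function.comp_def] using this
  filter_upwards [h0.eventually_lt_const (by positivity : (0 : ℝ) < c / 2)] with n hn t
  have h1 : |t ⬝ᵥ (Qn n - Q) *ᵥ t| ≤ (∑ i, ∑ j, |(Qn n - Q) i j|) * (t ⬝ᵥ t) := by
    have hle : ∀ i, |t i| ≤ enorm2 t := fun i => by
      rw [aux_enorm2_norm, ← Real.norm_eq_abs]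
      exact PiLp.norm_apply_le (WithLp.toLp 2 t : EuclideanSpace ℝ ι) i
    rw [← aux_enorm2_sq, Finset.sum_mul]
    simp only [dotProduct, mulVec]
    refine (Finset.abs_sum_le_sum_abs _ _).trans (Finset.sum_le_sum fun i _ => ?_)
    rw [abs_mul, Finset.sum_mul]
    refine (mul_le_mul_of_nonneg_left (Finset.abs_sum_le_sum_abs _ _) (abs_nonneg _)).trans ?_
    rw [Finset.mul_sum]
    refine Finset.sum_le_sum fun j _ => ?_
    rw [abs_mul]
    have := hle i
    have := hle j
    calc |t i| * (|(Qn n - Q) i j| * |t j|) ≤ enorm2 t * (|(Qn n - Q) i j| * enorm2 t) := by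
          gcongr
          exact aux_enorm2_nonneg t
      _ = _ := by ring
  have h2 : t ⬝ᵥ (Qn n - Q) *ᵥ t = t ⬝ᵥ Qn n *ᵥ t - t ⬝ᵥ Q *ᵥ t := by
    rw [sub_mulVec, dotProduct_sub]
  rw [h2] at h1
  have h3 := (abs_le.1 h1).1
  have h4 := h t
  have h5 : 0 ≤ t ⬝ᵥ t := by rw [← aux_enorm2_sq]; positivity
  nlinarith

/-- The error exponent in `fInfty` relative to the Gaussian exponent. -/
def auxErr {k l : ℕ} (Q : Matrix (Fin k ⊕ Fin l) (Fin k ⊕ Fin l) ℝ) (a b : ℝ)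
    (γ : Fin l → ℝ) (t : Fin k ⊕ Fin l → ℝ) : ℝ :=
  enorm2 (gdir a b (msqrt (auxSC Q) *ᵥ ((t ∘ Sum.inr) + γ)) - msqrt (auxSC Q) *ᵥ γ) ^ 2 -
    enorm2 (msqrt (auxSC Q) *ᵥ (t ∘ Sum.inr)) ^ 2

/-- The prefactor. -/
def auxP (k l : ℕ) (σ2 : ℝ) : ℝ := (2 * π * σ2) ^ (-((k : ℝ) + l) / 2)

lemma aux_fInfty_eq {k l : ℕ} {Q : Matrix (Fin k ⊕ Fin l) (Fin k ⊕ Fin l) ℝ} (hQ : Q.PosDef)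
    (σ2 α : ℝ) (γ : Fin l → ℝ) (t : Fin k ⊕ Fin l → ℝ) :
    fInfty Q σ2 α γ t = auxP k l σ2 * Real.sqrt Q.det *
      auxA α σ2 l (gfun (Real.exp (2 * α * l)) (σ2 / α)
        (enorm2 (msqrt (auxSC Q) *ᵥ ((t ∘ Sum.inr) + γ)))) *
      auxB α σ2 l (gfun (Real.exp (2 * α * l)) (σ2 / α)
        (enorm2 (msqrt (auxSC Q) *ᵥ ((t ∘ Sum.inr) + γ)))) *
      (Real.exp (-(t ⬝ᵥ Q *ᵥ t) / (2 * σ2)) *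
        Real.exp (-(auxErr Q (Real.exp (2 * α * l)) (σ2 / α) γ t) / (2 * σ2))) := by
  have h1 := aux_schur hQ (t ∘ Sum.inl) (t ∘ Sum.inr)
  rw [Sum.elim_comp_inl_inr, ← aux_first (aux_posDef11 hQ), ← aux_msqrt_quad (aux_SC_psd hQ)] at h1
  rw [← Real.exp_add, ← add_div]
  have h2 : -(t ⬝ᵥ Q *ᵥ t) + -(auxErr Q (Real.exp (2 * α * l)) (σ2 / α) γ t) =
    -(enorm2 ((msqrt Q.toBlocks₁₁).mulVec (t ∘ Sum.inl) +
        ((msqrt Q.toBlocks₁₁)⁻¹ * Q.toBlocks₁₂).mulVec (t ∘ Sum.inr))) ^ 2 +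
    -(enorm2 (gdir (Real.exp (2 * α * l)) (σ2 / α) (msqrt (auxSC Q) *ᵥ ((t ∘ Sum.inr) + γ)) -
      msqrt (auxSC Q) *ᵥ γ)) ^ 2 := by
    rw [h1]; unfold auxErr; ring
  rw [h2, add_div, Real.exp_add]
  unfold fInfty auxA auxB auxP auxSC
  ring

lemma aux_gauss_eq {k l : ℕ} (Q : Matrix (Fin k ⊕ Fin l) (Fin k ⊕ Fin l) ℝ) (σ2 : ℝ)
    (t : Fin k ⊕ Fin l → ℝ) :
    gaussCovDens σ2 Q t = auxP k l σ2 * Real.sqrt Q.det * Real.exp (-(t ⬝ᵥ Q *ᵥ t) / (2 * σ2)) := by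
  simp [gaussCovDens, auxP]

lemma aux_vec {k l : ℕ} (Q : Matrix (Fin k ⊕ Fin l) (Fin k ⊕ Fin l) ℝ) (a b : ℝ)
    (γ : Fin l → ℝ) (t : Fin k ⊕ Fin l → ℝ) :
    gdir a b (msqrt (auxSC Q) *ᵥ ((t ∘ Sum.inr) + γ)) - msqrt (auxSC Q) *ᵥ γ =
      msqrt (auxSC Q) *ᵥ (t ∘ Sum.inr) + (gdir a b (msqrt (auxSC Q) *ᵥ ((t ∘ Sum.inr) + γ)) -
        msqrt (auxSC Q) *ᵥ ((t ∘ Sum.inr) + γ)) := by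
  rw [mulVec_add]; abel

lemma aux_Z_le {k l : ℕ} {Q : Matrix (Fin k ⊕ Fin l) (Fin k ⊕ Fin l) ℝ} (hQ : Q.PosDef)
    (t : Fin k ⊕ Fin l → ℝ) :
    enorm2 (msqrt (auxSC Q) *ᵥ (t ∘ Sum.inr)) ^ 2 ≤ t ⬝ᵥ Q *ᵥ t := by
  have h1 := aux_schur hQ (t ∘ Sum.inl) (t ∘ Sum.inr)
  rw [Sum.elim_comp_inl_inr, ← aux_first (aux_posDef11 hQ), ← aux_msqrt_quad (aux_SC_psd hQ)] at h1
  rw [h1]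
  have := sq_nonneg (enorm2 ((msqrt Q.toBlocks₁₁).mulVec (t ∘ Sum.inl) +
        ((msqrt Q.toBlocks₁₁)⁻¹ * Q.toBlocks₁₂).mulVec (t ∘ Sum.inr)))
  linarith

/-- lower bound for the Schur complement -/
lemma aux_SC_lower {k l : ℕ} {Q : Matrix (Fin k ⊕ Fin l) (Fin k ⊕ Fin l) ℝ} (hQ : Q.PosDef)
    {c : ℝ} (hc : 0 < c) (h : ∀ t : Fin k ⊕ Fin l → ℝ, c * (t ⬝ᵥ t) ≤ t ⬝ᵥ Q *ᵥ t)
    (v : Fin l → ℝ) : c * enorm2 v ^ 2 ≤ enorm2 (msqrt (auxSC Q) *ᵥ v) ^ 2 := by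
  have h1 := aux_schur hQ (-((Q.toBlocks₁₁⁻¹ * Q.toBlocks₁₂) *ᵥ v)) v
  rw [neg_add_cancel, zero_dotProduct, zero_add, ← aux_msqrt_quad (aux_SC_psd hQ)] at h1
  rw [← h1]
  refine le_trans ?_ (h _)
  gcongr
  rw [sumElim_dotProduct_sumElim, aux_enorm2_sq, ← aux_enorm2_sq (-_)]
  have := sq_nonneg (enorm2 (-((Q.toBlocks₁₁⁻¹ * Q.toBlocks₁₂) *ᵥ v)))
  linarith

lemma aux_err_lower {k l : ℕ} (Q : Matrix (Fin k ⊕ Fin l) (Fin k ⊕ Fin l) ℝ) {a b : ℝ}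
    (ha : 0 < a) (hb : 0 < b) (γ : Fin l → ℝ) (t : Fin k ⊕ Fin l → ℝ) :
    -(enorm2 (msqrt (auxSC Q) *ᵥ (t ∘ Sum.inr)) ^ 2 / 2) - (a * (1 + b)) ^ 2 ≤
      auxErr Q a b γ t := by
  unfold auxErr
  set z := msqrt (auxSC Q) *ᵥ (t ∘ Sum.inr) with hz
  set w := msqrt (auxSC Q) *ᵥ ((t ∘ Sum.inr) + γ) with hw
  set p := gdir a b w - msqrt (auxSC Q) *ᵥ γ with hp
  have h1 : z = p + -(gdir a b w - w) := by
    have := aux_vec Q a b γ t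
    rw [← hz, ← hw, ← hp] at this
    rw [this]; abel
  have h2 : enorm2 z ≤ enorm2 p + a * (1 + b) := by
    calc enorm2 z ≤ enorm2 p + enorm2 (-(gdir a b w - w)) := by
          conv_lhs => rw [h1]
          exact aux_enorm2_add _ _
      _ ≤ _ := by
        rw [aux_enorm2_neg]
        gcongr
        exact (aux_gdir_sub ha hb w).trans (aux_phi_le ha hb (aux_enorm2_nonneg w))
  have h3 := aux_enorm2_nonneg z
  have h4 := aux_enorm2_nonneg p
  have h5 : enorm2 z ^ 2 ≤ (enorm2 p + a * (1 + b)) ^ 2 := by gcongr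
  nlinarith [sq_nonneg (enorm2 p - a * (1 + b))]

lemma aux_err_abs {k l : ℕ} (Q : Matrix (Fin k ⊕ Fin l) (Fin k ⊕ Fin l) ℝ) {a b : ℝ}
    (ha : 0 < a) (hb : 0 < b) (γ : Fin l → ℝ) (t : Fin k ⊕ Fin l → ℝ) :
    |auxErr Q a b γ t| ≤ auxPhi a b (enorm2 (msqrt (auxSC Q) *ᵥ ((t ∘ Sum.inr) + γ))) *
      (2 * enorm2 (msqrt (auxSC Q) *ᵥ (t ∘ Sum.inr)) +
        auxPhi a b (enorm2 (msqrt (auxSC Q) *ᵥ ((t ∘ Sum.inr) + γ)))) := by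
  unfold auxErr
  have hv := aux_vec Q a b γ t
  set z := msqrt (auxSC Q) *ᵥ (t ∘ Sum.inr) with hz
  set w := msqrt (auxSC Q) *ᵥ ((t ∘ Sum.inr) + γ) with hw
  set p := gdir a b w - msqrt (auxSC Q) *ᵥ γ with hp
  have hg := aux_gdir_sub ha hb w
  have h1 : z = p + -(gdir a b w - w) := by
    rw [hv]; abel
  have h2 : enorm2 z ≤ enorm2 p + auxPhi a b (enorm2 w) := by
    conv_lhs => rw [h1]
    refine (aux_enorm2_add _ _).trans ?_
    rw [aux_enorm2_neg]
    gcongr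
  have h2' : enorm2 p ≤ enorm2 z + auxPhi a b (enorm2 w) := by
    conv_lhs => rw [hv]
    refine (aux_enorm2_add _ _).trans ?_
    gcongr
  have h3 := aux_enorm2_nonneg z
  have h4 := aux_enorm2_nonneg p
  have h6 := (aux_enorm2_nonneg _).trans hg
  have h7 : enorm2 p ^ 2 - enorm2 z ^ 2 = (enorm2 p - enorm2 z) * (enorm2 p + enorm2 z) := by ring
  rw [h7, abs_mul, abs_of_nonneg (by positivity : 0 ≤ enorm2 p + enorm2 z)]
  have h8 : |enorm2 p - enorm2 z| ≤ auxPhi a b (enorm2 w) := abs_le.2 ⟨by linarith, by linarith⟩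
  exact mul_le_mul h8 (by linarith) (by positivity) h6

/-- The dominating constant. -/
def auxK (k l : ℕ) (α σ2 D : ℝ) : ℝ :=
  auxP k l σ2 * D * (1 + Real.exp (2 * α * l)) ^ l *
    Real.exp ((Real.exp (2 * α * l) * (1 + σ2 / α)) ^ 2 / (2 * σ2))

lemma aux_P_pos (k l : ℕ) {σ2 : ℝ} (hs : 0 < σ2) : 0 < auxP k l σ2 := by
  unfold auxP; positivity

lemma aux_fInfty_nonneg {k l : ℕ} {Q : Matrix (Fin k ⊕ Fin l) (Fin k ⊕ Fin l) ℝ} (hQ : Q.PosDef)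
    {σ2 α : ℝ} (hs : 0 < σ2) (hα : 0 < α) (γ : Fin l → ℝ) (t : Fin k ⊕ Fin l → ℝ) :
    0 ≤ fInfty Q σ2 α γ t := by
  rw [aux_fInfty_eq hQ]
  have h1 := aux_P_pos k l hs
  have h2 := aux_A_nonneg α σ2 l (gfun (Real.exp (2 * α * l)) (σ2 / α)
        (enorm2 (msqrt (auxSC Q) *ᵥ ((t ∘ Sum.inr) + γ))))
  have h3 := aux_B_nonneg hα hs l (gfun (Real.exp (2 * α * l)) (σ2 / α)
        (enorm2 (msqrt (auxSC Q) *ᵥ ((t ∘ Sum.inr) + γ))))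
  positivity

lemma aux_fInfty_le {k l : ℕ} {Q : Matrix (Fin k ⊕ Fin l) (Fin k ⊕ Fin l) ℝ} (hQ : Q.PosDef)
    {c D : ℝ} (h : ∀ t : Fin k ⊕ Fin l → ℝ, c * (t ⬝ᵥ t) ≤ t ⬝ᵥ Q *ᵥ t)
    (hD : Real.sqrt Q.det ≤ D)
    {σ2 α : ℝ} (hs : 0 < σ2) (hα : 0 < α) (γ : Fin l → ℝ) (t : Fin k ⊕ Fin l → ℝ) :
    fInfty Q σ2 α γ t ≤ auxK k l α σ2 D * Real.exp (-(c / (4 * σ2)) * (t ⬝ᵥ t)) := by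
  rw [aux_fInfty_eq hQ]
  have h1 := aux_P_pos k l hs
  set G := (gfun (Real.exp (2 * α * l)) (σ2 / α)
        (enorm2 (msqrt (auxSC Q) *ᵥ ((t ∘ Sum.inr) + γ))))
  have h2 := aux_A_nonneg α σ2 l G
  have h3 := aux_B_nonneg hα hs l G
  have h4 := aux_A_le hα hs l G
  have h5 := aux_B_le hα hs l G
  have hD0 : 0 ≤ D := (Real.sqrt_nonneg _).trans hD
  have h6 : Real.exp (-(t ⬝ᵥ Q *ᵥ t) / (2 * σ2)) *
        Real.exp (-(auxErr Q (Real.exp (2 * α * l)) (σ2 / α) γ t) / (2 * σ2)) ≤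
      Real.exp ((Real.exp (2 * α * l) * (1 + σ2 / α)) ^ 2 / (2 * σ2)) *
        Real.exp (-(c / (4 * σ2)) * (t ⬝ᵥ t)) := by
    rw [← Real.exp_add, ← Real.exp_add]
    apply Real.exp_le_exp.2
    have e1 := aux_err_lower Q (Real.exp_pos (2 * α * l)) (div_pos hs hα) γ t
    have e2 := aux_Z_le hQ t
    have e3 := h t
    have e4 : (Real.exp (2 * α * l) * (1 + σ2 / α)) ^ 2 / (2 * σ2) + -(c / (4 * σ2)) * (t ⬝ᵥ t) =
      ((Real.exp (2 * α * l) * (1 + σ2 / α)) ^ 2 - c * (t ⬝ᵥ t) / 2) / (2 * σ2) := by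
      field_simp
      ring
    rw [e4, ← add_div]
    apply div_le_div_of_nonneg_right _ (by positivity)
    linarith
  calc _ ≤ auxP k l σ2 * D * (1 + Real.exp (2 * α * l)) ^ l * 1 *
        (Real.exp ((Real.exp (2 * α * l) * (1 + σ2 / α)) ^ 2 / (2 * σ2)) *
        Real.exp (-(c / (4 * σ2)) * (t ⬝ᵥ t))) := by gcongr
    _ = _ := by unfold auxK; ring

lemma aux_gauss_le {k l : ℕ} {Q : Matrix (Fin k ⊕ Fin l) (Fin k ⊕ Fin l) ℝ}
    {c D : ℝ} (hc : 0 < c) (h : ∀ t : Fin k ⊕ Fin l → ℝ, c * (t ⬝ᵥ t) ≤ t ⬝ᵥ Q *ᵥ t)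
    (hD : Real.sqrt Q.det ≤ D)
    {σ2 : ℝ} (hs : 0 < σ2) (t : Fin k ⊕ Fin l → ℝ) :
    gaussCovDens σ2 Q t ≤ auxP k l σ2 * D * Real.exp (-(c / (4 * σ2)) * (t ⬝ᵥ t)) := by
  rw [aux_gauss_eq]
  have h1 := aux_P_pos k l hs
  have hD0 : 0 ≤ D := (Real.sqrt_nonneg _).trans hD
  have h0 : 0 ≤ t ⬝ᵥ t := by rw [← aux_enorm2_sq]; positivity
  gcongr
  have e3 := h t
  have e4 : -(c / (4 * σ2)) * (t ⬝ᵥ t) = (-(c * (t ⬝ᵥ t) / 2)) / (2 * σ2) := by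
    field_simp; ring
  rw [e4]
  apply div_le_div_of_nonneg_right _ (by positivity)
  have := mul_nonneg hc.le h0
  linarith

lemma aux_gauss_nonneg {k l : ℕ} (Q : Matrix (Fin k ⊕ Fin l) (Fin k ⊕ Fin l) ℝ)
    {σ2 : ℝ} (hs : 0 < σ2) (t : Fin k ⊕ Fin l → ℝ) : 0 ≤ gaussCovDens σ2 Q t := by
  rw [aux_gauss_eq]
  have h1 := aux_P_pos k l hs
  positivity

lemma aux_dom_int {ι : Type*} [Fintype ι] {c : ℝ} (hc : 0 < c) (K : ℝ) :
    Integrable (fun t : ι → ℝ => K * Real.exp (-c * (t ⬝ᵥ t))) := by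
  have hInt : Integrable (fun x : ι → ℝ => ∏ i, Real.exp (-c * x i ^ 2)) :=
    Integrable.fintype_prod (fun i => integrable_exp_neg_mul_sq hc)
  refine (hInt.const_mul K).congr (Eventually.of_forall fun x => ?_)
  simp only
  rw [← Real.exp_sum, ← Finset.mul_sum]
  simp [dotProduct, sq]

lemma aux_enorm2_cont {ι : Type*} [Fintype ι] : Continuous (enorm2 : (ι → ℝ) → ℝ) := by
  unfold enorm2; fun_prop

lemma aux_gauss_meas {k l : ℕ} (Q : Matrix (Fin k ⊕ Fin l) (Fin k ⊕ Fin l) ℝ) (σ2 : ℝ) :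
    Measurable (gaussCovDens σ2 Q) := by
  unfold gaussCovDens
  apply Continuous.measurable
  fun_prop

lemma aux_fInfty_meas {k l : ℕ} (Q : Matrix (Fin k ⊕ Fin l) (Fin k ⊕ Fin l) ℝ) {σ2 α : ℝ}
    (hs : 0 < σ2) (hα : 0 < α) (γ : Fin l → ℝ) : Measurable (fInfty Q σ2 α γ) := by
  have hg : Measurable (gfun (Real.exp (2 * α * l)) (σ2 / α)) :=
    (aux_g_mono (Real.exp_pos _) (div_pos hs hα)).measurable
  have hm : ∀ (p q : ℕ) (M : Matrix (Fin p) (Fin q) ℝ), Measurable fun v => M *ᵥ v :=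
    fun p q M => Continuous.measurable (by fun_prop)
  have he : ∀ p : ℕ, Measurable (enorm2 : (Fin p → ℝ) → ℝ) := fun p => aux_enorm2_cont.measurable
  have hl : Measurable fun t : Fin k ⊕ Fin l → ℝ => t ∘ Sum.inl :=
    Continuous.measurable (by fun_prop)
  have hr : Measurable fun t : Fin k ⊕ Fin l → ℝ => t ∘ Sum.inr :=
    Continuous.measurable (by fun_prop)
  have hw : Measurable fun t : Fin k ⊕ Fin l → ℝ =>
      msqrt (auxSC Q) *ᵥ ((t ∘ Sum.inr) + γ) := (hm _ _ _).comp (hr.add_const γ)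
  have hF : Measurable fun t : Fin k ⊕ Fin l → ℝ =>
      enorm2 ((msqrt Q.toBlocks₁₁).mulVec (t ∘ Sum.inl) +
        ((msqrt Q.toBlocks₁₁)⁻¹ * Q.toBlocks₁₂).mulVec (t ∘ Sum.inr)) :=
    (he _).comp (((hm _ _ _).comp hl).add ((hm _ _ _).comp hr))
  have hG : Measurable fun t : Fin k ⊕ Fin l → ℝ => gfun (Real.exp (2 * α * l)) (σ2 / α)
      (enorm2 (msqrt (auxSC Q) *ᵥ ((t ∘ Sum.inr) + γ))) := hg.comp ((he _).comp hw)
  have hE : Measurable fun t : Fin k ⊕ Fin l → ℝ =>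
      enorm2 (gdir (Real.exp (2 * α * l)) (σ2 / α) (msqrt (auxSC Q) *ᵥ ((t ∘ Sum.inr) + γ)) -
        msqrt (auxSC Q) *ᵥ γ) := by
    simp only [aux_gdir]
    exact (he _).comp (((hG.div ((he _).comp hw)).smul hw).sub_const _)
  unfold auxSC at hG hE
  unfold fInfty
  simp only
  fun_prop

lemma aux_L1 {k l : ℕ} {Q : Matrix (Fin k ⊕ Fin l) (Fin k ⊕ Fin l) ℝ} (hQ : Q.PosDef)
    {Qn : ℕ → Matrix (Fin k ⊕ Fin l) (Fin k ⊕ Fin l) ℝ} (hlim : Tendsto Qn atTop (𝓝 Q))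
    (hH : ∀ n, (Qn n).IsHermitian) {σ2 α : ℝ} (hs : 0 < σ2) (hα : 0 < α)
    {v : Fin l → ℝ} (hv : v ≠ 0) :
    Tendsto (fun n : ℕ => ∫ t, |gaussCovDens σ2 (Qn n) t -
      fInfty (Qn n) σ2 α (Real.sqrt n • v) t|) atTop (𝓝 0) ∧
    ∀ᶠ n : ℕ in atTop, (Qn n).PosDef ∧ Integrable (gaussCovDens σ2 (Qn n)) ∧
      Integrable (fInfty (Qn n) σ2 α (Real.sqrt n • v)) := by
  obtain ⟨c, hc, hlow⟩ := aux_lower_ev hQ hlim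
  have hpd : ∀ n, (∀ t : Fin k ⊕ Fin l → ℝ, c * (t ⬝ᵥ t) ≤ t ⬝ᵥ Qn n *ᵥ t) → (Qn n).PosDef := by
    intro n h
    refine PosDef.of_dotProduct_mulVec_pos (hH n) fun x hx => ?_
    refine lt_of_lt_of_le ?_ (h x)
    have : enorm2 x ≠ 0 := by rw [aux_enorm2_norm]; simpa using hx
    rw [← aux_enorm2_sq]; positivity
  have hdet : Tendsto (fun n => Real.sqrt (Qn n).det) atTop (𝓝 (Real.sqrt Q.det)) :=
    ((Real.continuous_sqrt.comp (continuous_id.matrix_det)).tendsto Q).comp hlim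
  have hDev := hdet.eventually_le_const (lt_add_one (Real.sqrt Q.det))
  set D := Real.sqrt Q.det + 1 with hDdef
  have hc4 : 0 < c / (4 * σ2) := by positivity
  have ha := Real.exp_pos (2 * α * l)
  have hb := div_pos hs hα
  refine ⟨?_, ?_⟩
  · have hz : (0 : ℝ) = ∫ t : Fin k ⊕ Fin l → ℝ, (0 : ℝ) := by simp
    rw [hz]
    refine tendsto_integral_filter_of_dominated_convergence
      (fun t => (auxP k l σ2 * D + auxK k l α σ2 D) * Real.exp (-(c / (4 * σ2)) * (t ⬝ᵥ t)))
      (Eventually.of_forall fun n => ?_) ?_ (aux_dom_int hc4 _) (Eventually.of_forall fun t => ?_)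
    · have := ((aux_gauss_meas (Qn n) σ2).sub
        (aux_fInfty_meas (Qn n) hs hα (Real.sqrt n • v))).norm
      exact this.aestronglyMeasurable
    · filter_upwards [hlow, hDev] with n h1 h2
      refine Eventually.of_forall fun t => ?_
      have hp := hpd n h1
      have g1 := aux_gauss_le hc h1 h2 hs t
      have g2 := aux_gauss_nonneg (Qn n) hs t
      have f1 := aux_fInfty_le hp h1 h2 hs hα (Real.sqrt n • v) t
      have f2 := aux_fInfty_nonneg hp hs hα (Real.sqrt n • v) t
      rw [Real.norm_eq_abs, abs_abs, add_mul]
      exact abs_le.2 ⟨by linarith, by linarith⟩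
    · -- pointwise convergence
      have hquad : Tendsto (fun n => t ⬝ᵥ Qn n *ᵥ t) atTop (𝓝 (t ⬝ᵥ Q *ᵥ t)) := by
        have hcq : Continuous fun M : Matrix (Fin k ⊕ Fin l) (Fin k ⊕ Fin l) ℝ => t ⬝ᵥ M *ᵥ t := by
          fun_prop
        exact (hcq.tendsto Q).comp hlim
      have hvn : 0 < enorm2 v := lt_of_le_of_ne (aux_enorm2_nonneg v)
        (Ne.symm (by rw [aux_enorm2_norm]; simpa using hv))
      have hw : Tendsto (fun n : ℕ => enorm2 (msqrt (auxSC (Qn n)) *ᵥ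
          ((t ∘ Sum.inr) + Real.sqrt n • v))) atTop atTop := by
        have hb1 : Tendsto (fun n : ℕ => Real.sqrt c * (Real.sqrt n * enorm2 v -
            enorm2 (t ∘ Sum.inr))) atTop atTop := by
          apply Tendsto.const_mul_atTop (by positivity)
          apply tendsto_atTop_add_const_right
          apply Tendsto.atTop_mul_const hvn
          exact Real.tendsto_sqrt_atTop.comp tendsto_natCast_atTop_atTop
        refine tendsto_atTop_mono' _ ?_ hb1
        filter_upwards [hlow] with n h1
        have hp := hpd n h1
        have h2 := aux_SC_lower hp hc h1 ((t ∘ Sum.inr) + Real.sqrt n • v)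
        have h3 : Real.sqrt n * enorm2 v ≤
            enorm2 ((t ∘ Sum.inr) + Real.sqrt n • v) + enorm2 (t ∘ Sum.inr) := by
          have e1 : Real.sqrt n • v = ((t ∘ Sum.inr) + Real.sqrt n • v) + -(t ∘ Sum.inr) := by abel
          have e2 := aux_enorm2_add ((t ∘ Sum.inr) + Real.sqrt n • v) (-(t ∘ Sum.inr))
          rw [← e1, aux_enorm2_neg, aux_enorm2_smul, abs_of_nonneg (Real.sqrt_nonneg _)] at e2
          exact e2
        have h4 : Real.sqrt c * enorm2 ((t ∘ Sum.inr) + Real.sqrt n • v) ≤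
            enorm2 (msqrt (auxSC (Qn n)) *ᵥ ((t ∘ Sum.inr) + Real.sqrt n • v)) := by
          refine (sq_le_sq₀ (mul_nonneg (Real.sqrt_nonneg _) (aux_enorm2_nonneg _))
            (aux_enorm2_nonneg _)).1 ?_
          rw [mul_pow, Real.sq_sqrt hc.le]
          exact h2
        refine le_trans ?_ h4
        gcongr
        linarith
      have hG : Tendsto (fun n : ℕ => gfun (Real.exp (2 * α * l)) (σ2 / α)
          (enorm2 (msqrt (auxSC (Qn n)) *ᵥ ((t ∘ Sum.inr) + Real.sqrt n • v)))) atTop atTop :=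
        tendsto_atTop_mono (fun n => aux_g_ge ha hb (aux_enorm2_nonneg _)) hw
      have hPhi := (aux_phi_tendsto ha hb).comp hw
      have hErr : Tendsto (fun n : ℕ => auxErr (Qn n) (Real.exp (2 * α * l)) (σ2 / α)
          (Real.sqrt n • v) t) atTop (𝓝 0) := by
        have hR : Tendsto (fun n => Real.sqrt (t ⬝ᵥ Qn n *ᵥ t)) atTop
            (𝓝 (Real.sqrt (t ⬝ᵥ Q *ᵥ t))) := (Real.continuous_sqrt.tendsto _).comp hquad
        have hbd := hPhi.mul ((hR.const_mul 2).add hPhi)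
        rw [zero_mul] at hbd
        refine squeeze_zero_norm' ?_ hbd
        filter_upwards [hlow] with n h1
        have hp := hpd n h1
        rw [Real.norm_eq_abs]
        refine (aux_err_abs (Qn n) ha hb (Real.sqrt n • v) t).trans ?_
        have h5 : enorm2 (msqrt (auxSC (Qn n)) *ᵥ (t ∘ Sum.inr)) ≤
            Real.sqrt (t ⬝ᵥ Qn n *ᵥ t) := Real.le_sqrt_of_sq_le (aux_Z_le hp t)
        have h6 : 0 ≤ auxPhi (Real.exp (2 * α * l)) (σ2 / α)
            (enorm2 (msqrt (auxSC (Qn n)) *ᵥ ((t ∘ Sum.inr) + Real.sqrt n • v))) :=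
          (aux_enorm2_nonneg _).trans (aux_gdir_sub ha hb _)
        simp only [Function.comp_apply]
        gcongr
      have hexp1 : Tendsto (fun n => Real.exp (-(t ⬝ᵥ Qn n *ᵥ t) / (2 * σ2))) atTop
          (𝓝 (Real.exp (-(t ⬝ᵥ Q *ᵥ t) / (2 * σ2)))) :=
        (Real.continuous_exp.tendsto _).comp (hquad.neg.div_const _)
      have hexp2 : Tendsto (fun n : ℕ => Real.exp (-(auxErr (Qn n) (Real.exp (2 * α * l)) (σ2 / α)
          (Real.sqrt n • v) t) / (2 * σ2))) atTop (𝓝 1) := by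
        have := (Real.continuous_exp.tendsto _).comp (hErr.neg.div_const (2 * σ2))
        simpa [Function.comp_def] using this
      have hA := (aux_A_tendsto hα hs l).comp hG
      have hB := (aux_B_tendsto hα hs l).comp hG
      have hgl := (hdet.const_mul (auxP k l σ2)).mul hexp1
      have hfl := (((hdet.const_mul (auxP k l σ2)).mul hA).mul hB).mul (hexp1.mul hexp2)
      have hd := (hgl.sub hfl).abs
      simp only [mul_one, sub_self, abs_zero] at hd
      refine hd.congr' ?_
      filter_upwards [hlow] with n h1
      have hp := hpd n h1
      rw [aux_fInfty_eq hp, aux_gauss_eq]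
      rfl
  · filter_upwards [hlow, hDev] with n h1 h2
    have hp := hpd n h1
    refine ⟨hp, ?_, ?_⟩
    · refine (aux_dom_int hc4 (auxP k l σ2 * D)).mono'
        (aux_gauss_meas (Qn n) σ2).aestronglyMeasurable (Eventually.of_forall fun t => ?_)
      rw [Real.norm_eq_abs, abs_of_nonneg (aux_gauss_nonneg _ hs t)]
      exact aux_gauss_le hc h1 h2 hs t
    · refine (aux_dom_int hc4 (auxK k l α σ2 D)).mono'
        (aux_fInfty_meas (Qn n) hs hα _).aestronglyMeasurable (Eventually.of_forall fun t => ?_)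
      rw [Real.norm_eq_abs, abs_of_nonneg (aux_fInfty_nonneg hp hs hα _ t)]
      exact aux_fInfty_le hp h1 h2 hs hα _ t

lemma aux_posDef_ev {ι : Type*} [Fintype ι] [DecidableEq ι] {Q : Matrix ι ι ℝ} (hQ : Q.PosDef)
    {Qn : ℕ → Matrix ι ι ℝ} (hlim : Tendsto Qn atTop (𝓝 Q)) (hH : ∀ n, (Qn n).IsHermitian) :
    ∀ᶠ n in atTop, (Qn n).PosDef := by
  obtain ⟨c, hc, hlow⟩ := aux_lower_ev hQ hlim
  filter_upwards [hlow] with n h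
  refine PosDef.of_dotProduct_mulVec_pos (hH n) fun x hx => ?_
  refine lt_of_lt_of_le ?_ (h x)
  have : enorm2 x ≠ 0 := by rw [aux_enorm2_norm]; simpa using hx
  rw [← aux_enorm2_sq]; positivity

/-- A sequence of events contained eventually in the complement of events whose probability
tends to one. -/
lemma aux_prob {k l : ℕ} (X : ∀ n : ℕ, Matrix (Fin n) (Fin k ⊕ Fin l) ℝ) (β : Fin k ⊕ Fin l → ℝ)
    {σ2 : ℝ} (hs : 0 < σ2) (Mhat : ∀ n : ℕ, (Fin n → ℝ) → Bool) (hM : ∀ n, Measurable (Mhat n))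
    (bb : Bool)
    (h1 : Tendsto (fun n : ℕ => Pmeas (X n) β σ2 {Y | Mhat n Y = bb}) atTop (𝓝 (1 : ℝ≥0∞)))
    (S : ∀ n : ℕ, Set (Fin n → ℝ))
    (hS : ∀ᶠ n in atTop, ∀ Y ∈ S n, Mhat n Y ≠ bb) :
    Tendsto (fun n => Pmeas (X n) β σ2 (S n)) atTop (𝓝 0) := by
  have h2 : Tendsto (fun n : ℕ => 1 - Pmeas (X n) β σ2 {Y | Mhat n Y = bb}) atTop
      (𝓝 (1 - 1 : ℝ≥0∞)) := ENNReal.Tendsto.sub tendsto_const_nhds h1 (Or.inl (by simp))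
  rw [tsub_self] at h2
  refine tendsto_of_tendsto_of_tendsto_of_le_of_le' tendsto_const_nhds h2
    (Eventually.of_forall fun n => zero_le) ?_
  filter_upwards [hS] with n hn
  have := aux_Pmeas_prob (X n) β hs
  have hms : MeasurableSet {Y | Mhat n Y = bb} := hM n (measurableSet_singleton bb)
  rw [← prob_compl_eq_one_sub hms]
  exact measure_mono fun Y hY => hn Y hY

/-- consistency (in total variation) of the estimator `F̌_n` of the
finite-sample distribution built from a consistent model selector `M̂` (`M̂ = true` codes
selection of the unrestricted model `M_U`, `M̂ = false` selection of `M_R`). -/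
theorem statement11 {k₁ k₂ : ℕ} (hk₁ : 0 < k₁) (hk₂ : 0 < k₂)
    (X : ∀ n : ℕ, Matrix (Fin n) (Fin k₁ ⊕ Fin k₂) ℝ)
    (hX : ∀ n, k₁ + k₂ ≤ n → (X n).rank = k₁ + k₂)
    (Q : Matrix (Fin k₁ ⊕ Fin k₂) (Fin k₁ ⊕ Fin k₂) ℝ) (hQ : Q.PosDef)
    (hlim : Tendsto (fun n : ℕ => (n : ℝ)⁻¹ • ((X n)ᵀ * X n)) atTop (𝓝 Q))
    (σ α : ℝ) (hσ : 0 < σ) (hα : 0 < α)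
    (Mhat : ∀ n : ℕ, (Fin n → ℝ) → Bool) (hM : ∀ n, Measurable (Mhat n))
    (hMR : ∀ β : (Fin k₁ ⊕ Fin k₂) → ℝ, β ∘ Sum.inr = 0 →
      Tendsto (fun n : ℕ => Pmeas (X n) β (σ ^ 2) {Y | Mhat n Y = false})
        atTop (𝓝 (1 : ℝ≥0∞)))
    (hMU : ∀ β : (Fin k₁ ⊕ Fin k₂) → ℝ, β ∘ Sum.inr ≠ 0 →
      Tendsto (fun n : ℕ => Pmeas (X n) β (σ ^ 2) {Y | Mhat n Y = true})
        atTop (𝓝 (1 : ℝ≥0∞))) :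
    ∀ β : (Fin k₁ ⊕ Fin k₂) → ℝ,
      (∀ ε : ℝ, 0 < ε →
        Tendsto (fun n : ℕ => Pmeas (X n) β (σ ^ 2)
            {Y | ε ≤ ∫ t, |(if Mhat n Y = true then
                  gaussCovDens (σ ^ 2) ((n : ℝ)⁻¹ • ((X n)ᵀ * X n)) t
                else fInfty ((n : ℝ)⁻¹ • ((X n)ᵀ * X n)) (σ ^ 2) α 0 t) -
                fdens (X n) β (σ ^ 2) α t| ∂volume})
          atTop (𝓝 (0 : ℝ≥0∞))) ∧
      (∀ δ : ℝ, 0 < δ →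
        Tendsto (fun n : ℕ => Pmeas (X n) β (σ ^ 2)
            {Y | δ < ⨆ s : Set ((Fin k₁ ⊕ Fin k₂) → ℝ), ⨆ (_ : MeasurableSet s),
              |(∫ t in s, (if Mhat n Y = true then
                    gaussCovDens (σ ^ 2) ((n : ℝ)⁻¹ • ((X n)ᵀ * X n)) t
                  else fInfty ((n : ℝ)⁻¹ • ((X n)ᵀ * X n)) (σ ^ 2) α 0 t) ∂volume) -
                (∫ t in s, fdens (X n) β (σ ^ 2) α t ∂volume)|})
          atTop (𝓝 (0 : ℝ≥0∞))) := by
  have hs : 0 < σ ^ 2 := by positivity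
  have hH : ∀ n : ℕ, ((n : ℝ)⁻¹ • ((X n)ᵀ * X n)).IsHermitian := by
    intro n
    rw [IsHermitian, conjTranspose_eq_transpose_of_trivial, transpose_smul, transpose_mul,
      transpose_transpose]
  intro β
  by_cases hβ : β ∘ Sum.inr = 0
  · have heq : ∀ᶠ n : ℕ in atTop, fdens (X n) β (σ ^ 2) α =
        fInfty ((n : ℝ)⁻¹ • ((X n)ᵀ * X n)) (σ ^ 2) α 0 := by
      filter_upwards [aux_posDef_ev hQ hlim hH, eventually_gt_atTop 0] with n h1 h2
      funext t
      rw [aux_fdens_eq (X n) h2 h1, hβ, smul_zero]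
    refine ⟨fun ε hε => ?_, fun δ hδ => ?_⟩
    · refine aux_prob X β hs Mhat hM false (hMR β hβ) _ ?_
      filter_upwards [heq] with n hn Y hY hf
      simp only [hf, hn] at hY
      simp at hY
      linarith
    · refine aux_prob X β hs Mhat hM false (hMR β hβ) _ ?_
      filter_upwards [heq] with n hn Y hY hf
      simp only [hf, hn] at hY
      simp at hY
      linarith
  · obtain ⟨hT, hI⟩ := aux_L1 hQ hlim hH hs hα hβ
    have heq : ∀ᶠ n : ℕ in atTop, fdens (X n) β (σ ^ 2) α =
        fInfty ((n : ℝ)⁻¹ • ((X n)ᵀ * X n)) (σ ^ 2) α (Real.sqrt n • (β ∘ Sum.inr)) := by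
      filter_upwards [aux_posDef_ev hQ hlim hH, eventually_gt_atTop 0] with n h1 h2
      funext t
      rw [aux_fdens_eq (X n) h2 h1]
    refine ⟨fun ε hε => ?_, fun δ hδ => ?_⟩
    · refine aux_prob X β hs Mhat hM true (hMU β hβ) _ ?_
      filter_upwards [heq, hT.eventually_lt_const hε] with n hn hlt Y hY hf
      simp only [hf, hn, if_true] at hY
      exact absurd hlt (not_lt.2 hY)
    · refine aux_prob X β hs Mhat hM true (hMU β hβ) _ ?_
      filter_upwards [heq, hT.eventually_lt_const hδ, hI] with n hn hlt hInt Y hY hf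
      obtain ⟨-, i1, i2⟩ := hInt
      simp only [hf, hn, if_true] at hY
      refine absurd hY (not_lt.2 (le_trans ?_ hlt.le))
      refine Real.iSup_le (fun s => Real.iSup_le (fun hms => ?_) ?_) ?_
      · rw [← integral_sub i1.integrableOn i2.integrableOn]
        refine (abs_integral_le_integral_abs).trans ?_
        exact setIntegral_le_integral (i1.sub i2).abs (Eventually.of_forall fun t => abs_nonneg _)
      · exact integral_nonneg fun t => abs_nonneg _
      · exact integral_nonneg fun t => abs_nonneg _

end
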